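/- Let G be a connected simple graph with n > 3 vertices, m edges, and maximum degree Δ(G). If Δ(G) ≤ (n + 1)/2, then mc(G) = m − n + 2. -/

import Mathlib

open SimpleGraph Filter Real

/-- An edge-coloring `c` (colors on vertex pairs, only the values on edges matter)
of `G` is a monochromatic connection coloring (MC-coloring) if every two vertices
are joined by a path all of whose edges receive the same color. -/
def IsMCColoring {V : Type*} (G : SimpleGraph V) (c : Sym2 V → ℕ) : Prop :=
  ∀ u v : V, ∃ p : G.Walk u v, p.IsPath ∧ ∃ k : ℕ, ∀ e ∈ p.edges, c e = k

/-- `mcNum G` is the maximum number of colors (counted on the edges of `G`)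
used in an MC-coloring of `G`; it is `0` if `G` admits no MC-coloring
(in particular if `G` is disconnected). -/
noncomputable def mcNum {V : Type*} (G : SimpleGraph V) : ℕ :=
  sSup {k | ∃ c : Sym2 V → ℕ, IsMCColoring G c ∧ (Set.image c G.edgeSet).ncard = k}

/-!
Coloring a spanning tree with one color and every other edge with its own color uses `m - n + 2`
colors. Conversely, let `S i` be the vertex sets of the components of the color classes of an
MC-coloring. A component has at least `|S i| - 1` edges, so at least `∑ (|S i| - 2)` of the `m`
edges are not needed to give each color one edge, and it suffices to show
`∑ (|S i| - 2) ≥ n - 2`.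

Each `S i` is connected, hence spans at most `(|S i| - 1) (|S i| - 2) / 2` nonadjacent pairs, and
all nonadjacent pairs are covered. As every vertex has at least `(n - 3) / 2` non-neighbors,
`∑ (|S i| - 2) ≤ n - 3` would force some `S i` to have more than `n / 2` vertices. A vertex `u`
outside that `S i` reaches its non-neighbors through the remaining sets only, each of which accounts
for at most `|S j| - 2` of them since `u` also has a neighbor there; this already exceeds the
remaining budget.
-/

section EdgeCounts

variable {V : Type*} {G : SimpleGraph V}

lemma ncard_edgeSet_spanningCoe {s : Set V} (H : SimpleGraph s) :
    H.spanningCoe.edgeSet.ncard = H.edgeSet.ncard := by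
  rw [edgeSet_map, Set.ncard_image_of_injective _ (Function.Embedding.injective _)]

lemma ncard_edgeSet_add_ncard_edgeSet_compl [Finite V] (G : SimpleGraph V) :
    G.edgeSet.ncard + Gᶜ.edgeSet.ncard = (Nat.card V).choose 2 := by
  classical
  have := Fintype.ofFinite V
  rw [← Set.ncard_union_eq (disjoint_edgeSet.2 disjoint_compl_right), ← edgeSet_sup,
    sup_compl_eq_top, Nat.card_eq_fintype_card, ← card_edgeFinset_top_eq_card_choose_two,
    ← Set.ncard_coe_finset, coe_edgeFinset]

lemma ncard_edgeSet_compl_le_of_connected [Finite V] (hG : G.Connected) :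
    Gᶜ.edgeSet.ncard ≤ (Nat.card V - 1).choose 2 := by
  have := hG.nonempty
  obtain ⟨n, hn⟩ := Nat.exists_eq_add_one.2 (Nat.card_pos (α := V))
  have hedges := hG.card_vert_le_card_edgeSet_add_one
  have htotal := ncard_edgeSet_add_ncard_edgeSet_compl G
  have hpascal : (n + 1).choose 2 = n + n.choose 2 := by
    rw [Nat.choose_succ_succ', Nat.choose_one_right]
  rw [Nat.card_coe_set_eq] at hedges
  rw [hn] at hedges htotal ⊢
  rw [Nat.add_sub_cancel]
  omega

lemma sum_ncard_edgeSet_toSimpleGraph [Finite V] [Fintype G.ConnectedComponent] :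
    ∑ C : G.ConnectedComponent, C.toSimpleGraph.edgeSet.ncard = G.edgeSet.ncard := by
  have hdisj : Pairwise (Function.onFun Disjoint
      fun C : G.ConnectedComponent ↦ C.toSimpleGraph.spanningCoe.edgeSet) := by
    intro C D hCD
    rw [Function.onFun, disjoint_edgeSet, disjoint_left]
    intro u v hC hD
    rw [ConnectedComponent.adj_spanningCoe_toSimpleGraph] at hC hD
    exact hCD (ConnectedComponent.eq_of_common_vertex hC.1 hD.1)
  have hunion : ⋃ C : G.ConnectedComponent, C.toSimpleGraph.spanningCoe.edgeSet = G.edgeSet := by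
    ext ⟨u, v⟩
    simp only [Set.mem_iUnion, mem_edgeSet, ConnectedComponent.adj_spanningCoe_toSimpleGraph]
    exact ⟨fun ⟨_, _, huv⟩ ↦ huv, fun huv ↦ ⟨G.connectedComponentMk u, rfl, huv⟩⟩
  calc ∑ C : G.ConnectedComponent, C.toSimpleGraph.edgeSet.ncard
      = ∑ C : G.ConnectedComponent, C.toSimpleGraph.spanningCoe.edgeSet.ncard :=
        Finset.sum_congr rfl fun C _ ↦ (ncard_edgeSet_spanningCoe C.toSimpleGraph).symm
    _ = G.edgeSet.ncard := by
        rw [← hunion, Set.ncard_iUnion_of_finite (fun _ ↦ Set.toFinite _) hdisj,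
          finsum_eq_sum_of_fintype]

lemma sum_ncard_supp_sub_two_lt_ncard_edgeSet [Finite V] [Fintype G.ConnectedComponent]
    (hG : G.edgeSet.Nonempty) :
    ∑ C : G.ConnectedComponent, (C.supp.ncard - 2) < G.edgeSet.ncard := by
  have hcomp (C : G.ConnectedComponent) : C.supp.ncard ≤ C.toSimpleGraph.edgeSet.ncard + 1 :=
    C.connected_toSimpleGraph.card_vert_le_card_edgeSet_add_one
  have hpos : ∑ C : G.ConnectedComponent, C.toSimpleGraph.edgeSet.ncard ≠ 0 := by
    rw [sum_ncard_edgeSet_toSimpleGraph]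
    exact hG.ncard_pos.ne'
  obtain ⟨C, hC, hCpos⟩ := Finset.exists_ne_zero_of_sum_ne_zero hpos
  rw [← sum_ncard_edgeSet_toSimpleGraph]
  refine Finset.sum_lt_sum (fun D _ ↦ ?_) ⟨C, hC, ?_⟩
  · have := hcomp D
    omega
  · have := hcomp C
    omega

lemma ncard_neighborSet_compl_inter_le_of_connected [Finite V] {s : Set V}
    (hs : (G.induce s).Connected) {u : V} (hu : u ∈ s) :
    (Gᶜ.neighborSet u ∩ s).ncard ≤ s.ncard - 2 := by
  obtain hsub | hnt := s.subsingleton_or_nontrivial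
  · have hempty : Gᶜ.neighborSet u ∩ s = ∅ := by
      ext v
      simpa using fun huv _ hv ↦ absurd (hsub hu hv) huv
    simp [hempty]
  · have := hnt.coe_sort
    obtain ⟨⟨w, hw⟩, huw⟩ := hs.preconnected.exists_adj_of_nontrivial ⟨u, hu⟩
    have huw : G.Adj u w := huw
    have hsub : Gᶜ.neighborSet u ∩ s ⊆ s \ {u, w} := by
      rintro v ⟨⟨huv, hv⟩, hvs⟩
      refine ⟨hvs, ?_⟩
      rintro (rfl | rfl)
      exacts [huv rfl, hv huw]
    calc (Gᶜ.neighborSet u ∩ s).ncard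
        ≤ (s \ {u, w}).ncard := Set.ncard_le_ncard hsub
      _ = s.ncard - 2 := by
        rw [Set.ncard_sdiff (by grind), Set.ncard_pair huw.ne]

lemma card_le_two_mul_degree_compl_add_three [Fintype V] [DecidableEq V] [DecidableRel G.Adj]
    (hΔ : 2 * G.maxDegree ≤ Fintype.card V + 1) (u : V) :
    Fintype.card V ≤ 2 * Gᶜ.degree u + 3 := by
  have := G.degree_le_maxDegree u
  rw [degree_compl]
  omega

end EdgeCounts

/-- A family of vertex sets, each inducing a connected subgraph of `G`, such that every two
distinct nonadjacent vertices lie in a common member. The vertex sets of the monochromatic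
components of an MC-coloring form such a family. Singletons are allowed: truncated subtraction makes
them contribute `0` to `∑ i, ((S i).ncard - 2)`. -/
structure IsConnectedNonadjCover {V ι : Type*} (G : SimpleGraph V) (S : ι → Set V) : Prop where
  connected : ∀ i, (G.induce (S i)).Connected
  exists_mem : ∀ ⦃u v⦄, Gᶜ.Adj u v → ∃ i, u ∈ S i ∧ v ∈ S i

namespace IsConnectedNonadjCover

variable {V ι : Type*} [Fintype ι] {G : SimpleGraph V} {S : ι → Set V}

lemma ncard_edgeSet_compl_le [Finite V] (hS : IsConnectedNonadjCover G S) :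
    Gᶜ.edgeSet.ncard ≤ ∑ i, ((S i).ncard - 1).choose 2 := by
  have hcover : Gᶜ.edgeSet ⊆ ⋃ i, (G.induce (S i))ᶜ.spanningCoe.edgeSet := by
    rintro ⟨u, v⟩ huv
    obtain ⟨i, hu, hv⟩ := hS.exists_mem huv
    have hadj : (G.induce (S i))ᶜ.Adj ⟨u, hu⟩ ⟨v, hv⟩ := by simpa using huv
    exact Set.mem_iUnion.2 ⟨i, (map_adj_apply (f := .subtype _)).2 hadj⟩
  calc Gᶜ.edgeSet.ncard
      ≤ (⋃ i, (G.induce (S i))ᶜ.spanningCoe.edgeSet).ncard := Set.ncard_le_ncard hcover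
    _ ≤ ∑ i, (G.induce (S i))ᶜ.spanningCoe.edgeSet.ncard := Set.ncard_iUnion_le_of_fintype _
    _ ≤ ∑ i, ((S i).ncard - 1).choose 2 := Finset.sum_le_sum fun i _ ↦ by
        rw [ncard_edgeSet_spanningCoe]
        exact ncard_edgeSet_compl_le_of_connected (hS.connected i)

open Classical in
lemma ncard_neighborSet_compl_le [Finite V] (hS : IsConnectedNonadjCover G S) (u : V) :
    (Gᶜ.neighborSet u).ncard ≤ ∑ i with u ∈ S i, ((S i).ncard - 2) := by
  have hcover : Gᶜ.neighborSet u ⊆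
      ⋃ i ∈ Finset.univ.filter (u ∈ S ·), Gᶜ.neighborSet u ∩ S i := by
    intro v huv
    obtain ⟨i, hu, hv⟩ := hS.exists_mem huv
    exact Set.mem_biUnion (by simpa using hu) ⟨huv, hv⟩
  calc (Gᶜ.neighborSet u).ncard
      ≤ (⋃ i ∈ Finset.univ.filter (u ∈ S ·), Gᶜ.neighborSet u ∩ S i).ncard :=
        Set.ncard_le_ncard hcover
    _ ≤ ∑ i with u ∈ S i, (Gᶜ.neighborSet u ∩ S i).ncard := Finset.set_ncard_biUnion_le _ _
    _ ≤ ∑ i with u ∈ S i, ((S i).ncard - 2) := Finset.sum_le_sum fun i hi ↦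
        ncard_neighborSet_compl_inter_le_of_connected (hS.connected i) (Finset.mem_filter.1 hi).2

variable [Fintype V] [DecidableEq V] [DecidableRel G.Adj]

lemma exists_card_le_two_mul (hS : IsConnectedNonadjCover G S) (hn : 3 < Fintype.card V)
    (hdeg : ∀ u, Fintype.card V ≤ 2 * Gᶜ.degree u + 3)
    (hsum : ∑ i, ((S i).ncard - 2) + 3 ≤ Fintype.card V) :
    ∃ i, Fintype.card V ≤ 2 * ((S i).ncard - 1) := by
  by_contra! hsmall
  set n := Fintype.card V
  have hlower : n * (n - 3) ≤ 4 * Gᶜ.edgeSet.ncard := by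
    calc n * (n - 3) = ∑ _u : V, (n - 3) := by simp [n]
      _ ≤ ∑ u, 2 * Gᶜ.degree u := Finset.sum_le_sum fun u _ ↦ by have := hdeg u; omega
      _ = 4 * Gᶜ.edgeSet.ncard := by
        have hncard : Gᶜ.edgeSet.ncard = Gᶜ.edgeFinset.card := Set.ncard_eq_toFinset_card' _
        rw [← Finset.mul_sum, sum_degrees_eq_twice_card_edges, hncard]
        ring
  have hupper : 4 * Gᶜ.edgeSet.ncard ≤ (n - 1) * (n - 3) := by
    calc 4 * Gᶜ.edgeSet.ncard
        ≤ 4 * ∑ i, ((S i).ncard - 1).choose 2 := Nat.mul_le_mul_left 4 hS.ncard_edgeSet_compl_le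
      _ = ∑ i, 4 * ((S i).ncard - 1).choose 2 := Finset.mul_sum ..
      _ ≤ ∑ i, (n - 1) * ((S i).ncard - 2) := Finset.sum_le_sum fun i _ ↦ by
        calc 4 * ((S i).ncard - 1).choose 2
            = 2 * (2 * (((S i).ncard - 1) * ((S i).ncard - 2) / 2)) := by
              rw [Nat.choose_two_right, Nat.sub_sub]; ring
          _ ≤ 2 * (((S i).ncard - 1) * ((S i).ncard - 2)) :=
              Nat.mul_le_mul_left 2 (Nat.mul_div_le _ 2)
          _ = 2 * ((S i).ncard - 1) * ((S i).ncard - 2) := (mul_assoc ..).symm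
          _ ≤ (n - 1) * ((S i).ncard - 2) :=
              Nat.mul_le_mul_right _ (Nat.le_sub_one_of_lt (hsmall i))
      _ = (n - 1) * ∑ i, ((S i).ncard - 2) := (Finset.mul_sum ..).symm
      _ ≤ (n - 1) * (n - 3) := Nat.mul_le_mul_left _ (by omega)
  have hlt : (n - 1) * (n - 3) < n * (n - 3) := Nat.mul_lt_mul_of_pos_right (by omega) (by omega)
  omega

lemma degree_compl_add_le (hS : IsConnectedNonadjCover G S) {i : ι} {u : V} (hu : u ∉ S i) :
    Gᶜ.degree u + ((S i).ncard - 2) ≤ ∑ j, ((S j).ncard - 2) := by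
  classical
  have hsub : Finset.univ.filter (u ∈ S ·) ⊆ Finset.univ.erase i := fun j hj ↦ by
    simp only [Finset.mem_filter, Finset.mem_univ, true_and] at hj
    simpa using fun hji : j = i ↦ hu (hji ▸ hj)
  calc Gᶜ.degree u + ((S i).ncard - 2)
      = (Gᶜ.neighborSet u).ncard + ((S i).ncard - 2) := by
        rw [← card_neighborSet_eq_degree, Fintype.card_eq_nat_card, Nat.card_coe_set_eq]
    _ ≤ ∑ j with u ∈ S j, ((S j).ncard - 2) + ((S i).ncard - 2) :=
        Nat.add_le_add_right (hS.ncard_neighborSet_compl_le u) _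
    _ ≤ ∑ j ∈ Finset.univ.erase i, ((S j).ncard - 2) + ((S i).ncard - 2) :=
        Nat.add_le_add_right (Finset.sum_le_sum_of_subset hsub) _
    _ = ∑ j, ((S j).ncard - 2) := Finset.sum_erase_add _ _ (Finset.mem_univ i)

theorem card_le_sum_ncard_sub_two_add_two (hS : IsConnectedNonadjCover G S)
    (hn : 3 < Fintype.card V) (hdeg : ∀ u, Fintype.card V ≤ 2 * Gᶜ.degree u + 3) :
    Fintype.card V ≤ ∑ i, ((S i).ncard - 2) + 2 := by
  by_contra! hsum
  obtain ⟨i, hi⟩ := hS.exists_card_le_two_mul hn hdeg hsum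
  have hle : (S i).ncard - 2 ≤ ∑ j, ((S j).ncard - 2) :=
    Finset.single_le_sum (f := fun j ↦ (S j).ncard - 2) (fun _ _ ↦ Nat.zero_le _)
      (Finset.mem_univ i)
  obtain ⟨u, hu⟩ : ∃ u, u ∉ S i := by
    rw [← Set.ne_univ_iff_exists_notMem]
    intro huniv
    rw [huniv, Set.ncard_univ, Nat.card_eq_fintype_card] at hle
    omega
  have := hS.degree_compl_add_le hu
  have := hdeg u
  omega

end IsConnectedNonadjCover

section Colorings

variable {V : Type*} {G : SimpleGraph V} {c : Sym2 V → ℕ} {k : ℕ}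

/-- The spanning subgraph of `G` whose edges are those of color `k` under `c`; its connected
components are the monochromatic components of color `k`. -/
def colorClass (G : SimpleGraph V) (c : Sym2 V → ℕ) (k : ℕ) : SimpleGraph V :=
  G.deleteEdges {e | c e ≠ k}

lemma colorClass_le : colorClass G c k ≤ G :=
  deleteEdges_le _

lemma mem_edgeSet_colorClass {e : Sym2 V} :
    e ∈ (colorClass G c k).edgeSet ↔ e ∈ G.edgeSet ∧ c e = k := by
  simp [colorClass]

lemma colorClass_reachable_of_walk {u v : V} (p : G.Walk u v) (hp : ∀ e ∈ p.edges, c e = k) :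
    (colorClass G c k).Reachable u v :=
  ⟨p.toDeleteEdges _ fun e he ↦ not_not_intro (hp e he)⟩

lemma sum_ncard_edgeSet_colorClass [Finite V] [Fintype (c '' G.edgeSet)] :
    ∑ k : c '' G.edgeSet, (colorClass G c k).edgeSet.ncard = G.edgeSet.ncard := by
  have hdisj : Pairwise (Function.onFun Disjoint
      fun k : c '' G.edgeSet ↦ (colorClass G c k).edgeSet) := by
    intro k l hkl
    refine Set.disjoint_left.2 fun e hk hl ↦ hkl (Subtype.ext ?_)
    exact (mem_edgeSet_colorClass.1 hk).2.symm.trans (mem_edgeSet_colorClass.1 hl).2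
  have hunion : ⋃ k : c '' G.edgeSet, (colorClass G c k).edgeSet = G.edgeSet := by
    ext e
    simp only [Set.mem_iUnion, mem_edgeSet_colorClass]
    exact ⟨fun ⟨_, he, _⟩ ↦ he, fun he ↦ ⟨⟨c e, e, he, rfl⟩, he, rfl⟩⟩
  calc ∑ k : c '' G.edgeSet, (colorClass G c k).edgeSet.ncard
      = (⋃ k : c '' G.edgeSet, (colorClass G c k).edgeSet).ncard := by
        rw [Set.ncard_iUnion_of_finite (fun _ ↦ Set.toFinite _) hdisj, finsum_eq_sum_of_fintype]
    _ = G.edgeSet.ncard := congrArg Set.ncard hunion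

lemma sum_ncard_supp_colorClass_add_le [Finite V] [Fintype (c '' G.edgeSet)]
    [∀ k, Fintype (colorClass G c k).ConnectedComponent] :
    ∑ i : Σ k : c '' G.edgeSet, (colorClass G c k).ConnectedComponent, (i.2.supp.ncard - 2) +
      (c '' G.edgeSet).ncard ≤ G.edgeSet.ncard := by
  have hclass (k : c '' G.edgeSet) :
      ∑ C : (colorClass G c k).ConnectedComponent, (C.supp.ncard - 2) + 1 ≤
        (colorClass G c k).edgeSet.ncard := by
    obtain ⟨e, he, hek⟩ := k.2
    exact sum_ncard_supp_sub_two_lt_ncard_edgeSet ⟨e, mem_edgeSet_colorClass.2 ⟨he, hek⟩⟩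
  calc _ = ∑ k : c '' G.edgeSet,
        (∑ C : (colorClass G c k).ConnectedComponent, (C.supp.ncard - 2) + 1) := by
        rw [Fintype.sum_sigma, Finset.sum_add_distrib, Finset.sum_const, smul_eq_mul, mul_one,
          Finset.card_univ, Fintype.card_eq_nat_card, Nat.card_coe_set_eq]
    _ ≤ ∑ k : c '' G.edgeSet, (colorClass G c k).edgeSet.ncard :=
        Finset.sum_le_sum fun k _ ↦ hclass k
    _ = G.edgeSet.ncard := sum_ncard_edgeSet_colorClass

namespace IsMCColoring

lemma mcNum_eq_ncard_image (hc : IsMCColoring G c)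
    (hmax : ∀ d, IsMCColoring G d → (d '' G.edgeSet).ncard ≤ (c '' G.edgeSet).ncard) :
    mcNum G = (c '' G.edgeSet).ncard := by
  refine IsGreatest.csSup_eq ⟨⟨c, hc, rfl⟩, ?_⟩
  rintro _ ⟨d, hd, rfl⟩
  exact hmax d hd

lemma isConnectedNonadjCover (hc : IsMCColoring G c) :
    IsConnectedNonadjCover G
      fun i : Σ k : c '' G.edgeSet, (colorClass G c k).ConnectedComponent ↦ i.2.supp where
  connected i := i.2.connected_toSimpleGraph.mono (comap_monotone _ colorClass_le)
  exists_mem u v huv := by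
    obtain ⟨p, -, k, hp⟩ := hc u v
    have hne : p.edges ≠ [] := fun h ↦ huv.ne (Walk.edges_eq_nil.1 h).eq
    obtain ⟨e, he⟩ := List.exists_mem_of_ne_nil _ hne
    have hk : k ∈ c '' G.edgeSet := ⟨e, p.edges_subset_edgeSet he, hp e he⟩
    refine ⟨⟨⟨k, hk⟩, (colorClass G c k).connectedComponentMk u⟩, rfl, ?_⟩
    exact ConnectedComponent.sound (colorClass_reachable_of_walk p hp).symm

lemma of_connected_le {T : SimpleGraph V} (hT : T.Connected) (hTG : T ≤ G)
    (hc : ∀ e ∈ T.edgeSet, c e = k) : IsMCColoring G c := by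
  intro u v
  obtain ⟨p, hp⟩ := (hT.preconnected u v).exists_isPath
  refine ⟨p.mapLe hTG, hp.mapLe hTG, k, fun e he ↦ hc e ?_⟩
  rw [Walk.edges_mapLe_eq_edges] at he
  exact p.edges_subset_edgeSet he

theorem ncard_image_add_card_le [Fintype V] [DecidableEq V] [DecidableRel G.Adj]
    (hc : IsMCColoring G c) (hn : 3 < Fintype.card V)
    (hdeg : ∀ u, Fintype.card V ≤ 2 * Gᶜ.degree u + 3) :
    (c '' G.edgeSet).ncard + Fintype.card V ≤ G.edgeSet.ncard + 2 := by
  have (k : ℕ) := Fintype.ofFinite (colorClass G c k).ConnectedComponent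
  have := Fintype.ofFinite (c '' G.edgeSet)
  have hcover := hc.isConnectedNonadjCover.card_le_sum_ncard_sub_two_add_two hn hdeg
  have hcount := sum_ncard_supp_colorClass_add_le (G := G) (c := c)
  omega

end IsMCColoring

theorem exists_isMCColoring_ncard_image_add_card_eq [Finite V] [Nontrivial V] (hG : G.Connected) :
    ∃ c : Sym2 V → ℕ, IsMCColoring G c ∧
      (c '' G.edgeSet).ncard + Nat.card V = G.edgeSet.ncard + 2 := by
  classical
  obtain ⟨T, hTG, hT⟩ := hG.exists_isTree_le
  have hsub : T.edgeSet ⊆ G.edgeSet := edgeSet_mono hTG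
  have hTcard : T.edgeSet.ncard + 1 = Nat.card V := (isTree_iff_connected_and_card.1 hT).2
  have hVcard := Finite.one_lt_card (α := V)
  obtain ⟨e₀, he₀⟩ : T.edgeSet.Nonempty := by
    rw [← Set.ncard_pos]
    omega
  obtain ⟨f, hf⟩ := exists_injective_nat (Sym2 V)
  let g : Sym2 V → Sym2 V := fun e ↦ if e ∈ T.edgeSet then e₀ else e
  have himage : g '' G.edgeSet = insert e₀ (G.edgeSet \ T.edgeSet) := by
    ext e
    simp only [g, Set.mem_image, Set.mem_insert_iff, Set.mem_sdiff]
    grind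
  have hle := Set.ncard_le_ncard hsub
  refine ⟨f ∘ g, ?_, ?_⟩
  · exact .of_connected_le hT.connected hTG (k := f e₀) fun e he ↦ by simp [g, he]
  · rw [Set.image_comp, Set.ncard_image_of_injective _ hf, himage,
      Set.ncard_insert_of_notMem fun h ↦ h.2 he₀, Set.ncard_sdiff hsub]
    omega

end Colorings

/-- If `G` is a connected graph with `n > 3` vertices and maximum degree
`Δ(G) ≤ (n+1)/2`, then `mc(G) = m - n + 2`. -/
theorem mc_eq_of_maxDegree_le_half {V : Type*} [Fintype V] [DecidableEq V]
    (G : SimpleGraph V) [DecidableRel G.Adj] (hG : G.Connected)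
    (hn : 3 < Fintype.card V)
    (hΔ : (G.maxDegree : ℝ) ≤ ((Fintype.card V : ℝ) + 1) / 2) :
    (mcNum G : ℤ) = (G.edgeFinset.card : ℤ) - (Fintype.card V : ℤ) + 2 := by
  have hΔ' : 2 * G.maxDegree ≤ Fintype.card V + 1 := by
    have : 2 * (G.maxDegree : ℝ) ≤ Fintype.card V + 1 := by linarith
    exact_mod_cast this
  have : Nontrivial V := Fintype.one_lt_card_iff_nontrivial.1 (by omega)
  obtain ⟨c, hc, hcard⟩ := exists_isMCColoring_ncard_image_add_card_eq hG
  rw [Nat.card_eq_fintype_card] at hcard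
  have hmc : mcNum G = (c '' G.edgeSet).ncard := hc.mcNum_eq_ncard_image fun d hd ↦ by
    have := hd.ncard_image_add_card_le hn (card_le_two_mul_degree_compl_add_three hΔ')
    omega
  have hm : G.edgeSet.ncard = G.edgeFinset.card := Set.ncard_eq_toFinset_card' _
  omega
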